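/- Let k, m be positive integers and let i, j be integers with 0 ≤ j < i ≤ k. For any strictly increasing sequence 1 ≤ ℓ_1 < ℓ_2 < … < ℓ_{k−j} ≤ k, the complete homogeneous symmetric polynomial h_{m+i}(x_{ℓ_1},…,x_{ℓ_{k−j}}) of degree m+i in the k−j indicated variables vanishes in R(k,m). -/

import Mathlib

/-!
Everything rests on the recurrence `h_{d+1}(x, l) = h_{d+1}(l) + x * h_d(x, l)` and on the symmetry
of `h_d`, which is visible on the generating series `∏ (1 + x T + x² T² + ⋯)`.

Read from left to right, the recurrence propagates vanishing upwards in the degree: if `h_d(l)` and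
one `h_d(x, l)` vanish, so do all later `h_d(x, l)`. Adding the variables `x_1, …, x_k` one at a
time, the relations of `R(k,m)` are exactly the initial values needed to conclude that
`h_n(x_1, …, x_k) = 0` for all `n > m`.

Solved for `h_{d+1}(l)`, it shows that deleting a variable raises the bound for vanishing by one. By
symmetry any variables may be deleted, so `r` distinct variables have `h_n = 0` for `n > m + k - r`.
-/

open scoped TensorProduct

/-- Complete homogeneous symmetric polynomial of degree `d` in a list of elements
of a commutative (semi)ring: `h_d(l)`. -/
noncomputable def completeHomog {R : Type*} [CommSemiring R] : List R → ℕ → R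
  | [], 0 => 1
  | [], _ + 1 => 0
  | x :: l, d => ∑ t ∈ Finset.range (d + 1), x ^ t * completeHomog l (d - t)

/-- Elementary symmetric polynomial of degree `d` in a list of elements: `e_d(l)`. -/
noncomputable def elemSymm {R : Type*} [CommSemiring R] : List R → ℕ → R
  | _, 0 => 1
  | [], _ + 1 => 0
  | x :: l, d + 1 => elemSymm l (d + 1) + x * elemSymm l d

/-- The ideal of `(ZMod 2)[x_1, …, x_k]` generated by the complete homogeneous
symmetric polynomials `h_{m+i}(x_1, …, x_{k+1-i})` for `1 ≤ i ≤ k`. -/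
noncomputable def flagIdeal (k m : ℕ) : Ideal (MvPolynomial (Fin k) (ZMod 2)) :=
  Ideal.span { p | ∃ i : ℕ, 1 ≤ i ∧ i ≤ k ∧
    p = completeHomog (((List.finRange k).take (k + 1 - i)).map MvPolynomial.X) (m + i) }

/-- `R(k,m)`, the quotient of `(ZMod 2)[x_1, …, x_k]` by `flagIdeal k m`;
this is the mod-2 cohomology ring of the real flag manifold `F(1^k, m)`. -/
abbrev FlagRing (k m : ℕ) : Type :=
  MvPolynomial (Fin k) (ZMod 2) ⧸ flagIdeal k m

/-- The image of the variable `x_{j+1}` in `R(k,m)` (`j` is 0-indexed). -/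
noncomputable def xGen (k m : ℕ) (j : Fin k) : FlagRing k m :=
  Ideal.Quotient.mk (flagIdeal k m) (MvPolynomial.X j)

/-- The zero-divisor `z_{j+1} = x_{j+1} ⊗ 1 + 1 ⊗ x_{j+1}` in `R(k,m) ⊗ R(k,m)`. -/
noncomputable def zGen (k m : ℕ) (j : Fin k) :
    FlagRing k m ⊗[ZMod 2] FlagRing k m :=
  xGen k m j ⊗ₜ 1 + 1 ⊗ₜ xGen k m j

/-- `x_{i+1,j+1}` in the `s`-fold tensor power `R(k,m)^{⊗ s}`: the element having
`x_{j+1}` in the `(i+1)`-st tensor factor and `1` elsewhere (`i`, `j` 0-indexed). -/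
noncomputable def xT (k m s : ℕ) (i : Fin s) (j : Fin k) :
    ⨂[ZMod 2] _ : Fin s, FlagRing k m :=
  PiTensorProduct.tprod (ZMod 2) (fun t => if t = i then xGen k m j else 1)

/-- The `s`-th zero-divisor `z_{i+1,j+1} = x_{1,j+1} + x_{i+1,j+1}` in `R(k,m)^{⊗ s}`. -/
noncomputable def zT (k m s : ℕ) (hs : 0 < s) (i : Fin s) (j : Fin k) :
    ⨂[ZMod 2] _ : Fin s, FlagRing k m :=
  xT k m s ⟨0, hs⟩ j + xT k m s i j

section CompleteHomog

variable {R : Type*} [CommSemiring R]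

theorem mk_completeHomog (l : List R) :
    PowerSeries.mk (completeHomog l) = (l.map fun x => PowerSeries.mk (x ^ ·)).prod := by
  induction l with
  | nil =>
    ext d
    cases d <;> simp [completeHomog, PowerSeries.coeff_one]
  | cons x l ih =>
    rw [List.map_cons, List.prod_cons, ← ih]
    ext d
    rw [PowerSeries.coeff_mul, Finset.Nat.sum_antidiagonal_eq_sum_range_succ_mk]
    simp [completeHomog]

theorem completeHomog_eq_of_perm {l l' : List R} (h : l.Perm l') :
    completeHomog l = completeHomog l' := by
  have hseries : PowerSeries.mk (completeHomog l) = PowerSeries.mk (completeHomog l') := by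
    rw [mk_completeHomog, mk_completeHomog, (h.map _).prod_eq]
  funext d
  simpa using congrArg (PowerSeries.coeff d) hseries

theorem completeHomog_cons_succ (x : R) (l : List R) (d : ℕ) :
    completeHomog (x :: l) (d + 1) = completeHomog l (d + 1) + x * completeHomog (x :: l) d := by
  rw [completeHomog, Finset.sum_range_succ', add_comm]
  simp only [completeHomog, Finset.mul_sum, pow_succ', mul_assoc, Nat.add_sub_add_right, pow_zero,
    one_mul, Nat.sub_zero]

theorem map_completeHomog {S : Type*} [CommSemiring S] (f : R →+* S) (l : List R) (d : ℕ) :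
    f (completeHomog l d) = completeHomog (l.map f) d := by
  induction l generalizing d with
  | nil => cases d <;> simp [completeHomog]
  | cons x l ih => simp [completeHomog, ih]

theorem completeHomog_eq_zero_of_forall_prefix {l : List R} {a : ℕ}
    (h : ∀ l₁ l₂, l₁ ≠ [] → l₁ ++ l₂ = l → completeHomog l₁ (a + l₂.length + 1) = 0)
    {n : ℕ} (hn : a < n) : completeHomog l n = 0 := by
  induction l using List.reverseRecOn generalizing a n with
  | nil =>
    obtain ⟨d, rfl⟩ := Nat.exists_eq_add_one_of_ne_zero (Nat.ne_zero_of_lt hn)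
    rw [completeHomog]
  | append_singleton l x ih =>
    have hl : ∀ {d}, a + 1 < d → completeHomog l d = 0 := ih fun l₁ l₂ hne heq => by
      simpa [add_assoc, add_comm, add_left_comm] using
        h l₁ (l₂ ++ [x]) hne (by rw [← List.append_assoc, heq])
    induction n, hn using Nat.le_induction with
    | base => exact h (l ++ [x]) [] (by simp) (List.append_nil _)
    | succ d hd ihd =>
      rw [completeHomog_eq_of_perm (List.perm_append_singleton x l)] at ihd ⊢
      rw [completeHomog_cons_succ, hl (Nat.succ_lt_succ hd), ihd, mul_zero, add_zero]

theorem completeHomog_eq_zero_of_cons {x : R} {l : List R} {a : ℕ}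
    (h : ∀ n, a < n → completeHomog (x :: l) n = 0) {n : ℕ} (hn : a + 1 < n) :
    completeHomog l n = 0 := by
  obtain ⟨d, rfl⟩ := Nat.exists_eq_add_one_of_ne_zero (Nat.ne_zero_of_lt hn)
  simpa [h (d + 1) (by omega), h d (by omega)] using (completeHomog_cons_succ x l d).symm

theorem completeHomog_eq_zero_of_append {l₁ l₂ : List R} {a : ℕ}
    (h : ∀ n, a < n → completeHomog (l₁ ++ l₂) n = 0) {n : ℕ} (hn : a + l₁.length < n) :
    completeHomog l₂ n = 0 := by
  induction l₁ generalizing a with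
  | nil => exact h n hn
  | cons x l ih =>
    exact ih (fun _ => completeHomog_eq_zero_of_cons h) (by rw [List.length_cons] at hn; omega)

theorem completeHomog_eq_zero_of_sublist {l₁ l₂ : List R} (hl : l₁.Sublist l₂) {a : ℕ}
    (h : ∀ n, a < n → completeHomog l₂ n = 0) {n : ℕ} (hn : a + l₂.length < n + l₁.length) :
    completeHomog l₁ n = 0 := by
  obtain ⟨c, hc⟩ := hl.exists_perm_append
  have hperm : l₂.Perm (c ++ l₁) := hc.trans List.perm_append_comm
  rw [completeHomog_eq_of_perm hperm] at h
  refine completeHomog_eq_zero_of_append h ?_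
  rw [hperm.length_eq, List.length_append] at hn
  omega

end CompleteHomog

section FlagRing

variable {k m : ℕ}

theorem completeHomog_xGen_prefix_eq_zero {l₁ l₂ : List (Fin k)} (hne : l₁ ≠ [])
    (heq : l₁ ++ l₂ = List.finRange k) :
    completeHomog (l₁.map (xGen k m)) (m + l₂.length + 1) = 0 := by
  have hlen : l₁.length + l₂.length = k := by
    simpa using congrArg List.length heq
  have hpos : 0 < l₁.length := List.length_pos_of_ne_nil hne
  have htake : (List.finRange k).take (k + 1 - (l₂.length + 1)) = l₁ := by
    rw [← heq, List.take_left' (by omega)]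
  have hmem : completeHomog (l₁.map MvPolynomial.X) (m + l₂.length + 1) ∈ flagIdeal k m :=
    Ideal.subset_span ⟨l₂.length + 1, by omega, by omega, by rw [htake, add_assoc]⟩
  have hmap : l₁.map (xGen k m) = (l₁.map MvPolynomial.X).map (Ideal.Quotient.mk (flagIdeal k m)) :=
    List.map_map.symm
  rw [hmap, ← map_completeHomog, Ideal.Quotient.eq_zero_iff_mem]
  exact hmem

theorem completeHomog_xGen_finRange_eq_zero {n : ℕ} (hn : m < n) :
    completeHomog ((List.finRange k).map (xGen k m)) n = 0 := by
  refine completeHomog_eq_zero_of_forall_prefix (fun l₁ l₂ hne heq => ?_) hn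
  obtain ⟨p, q, hpq, rfl, rfl⟩ := List.map_eq_append_iff.mp heq.symm
  rw [List.length_map]
  exact completeHomog_xGen_prefix_eq_zero (by simpa using hne) hpq.symm

theorem statement2_general {l : List (Fin k)} (hl : l.Nodup) {n : ℕ} (hn : m + k < n + l.length) :
    completeHomog (l.map (xGen k m)) n = 0 := by
  obtain ⟨l', hperm, hsub⟩ : l.Subperm (List.finRange k) :=
    hl.subperm fun x _ => List.mem_finRange x
  rw [← completeHomog_eq_of_perm (hperm.map _)]
  exact completeHomog_eq_zero_of_sublist (hsub.map _)
    (fun _ => completeHomog_xGen_finRange_eq_zero) (by simpa [hperm.length_eq] using hn)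

end FlagRing

/-- for `0 ≤ j < i ≤ k` and any strictly increasing sequence
`ℓ : Fin (k - j) → Fin k`, the complete homogeneous symmetric polynomial
`h_{m+i}(x_{ℓ_1}, …, x_{ℓ_{k-j}})` vanishes in `R(k,m)`. -/
theorem statement2 (k m : ℕ) (hk : 0 < k) (hm : 0 < m) (i j : ℕ) (hj : j < i) (hi : i ≤ k)
    (ℓ : Fin (k - j) → Fin k) (hℓ : StrictMono ℓ) :
    completeHomog ((List.finRange (k - j)).map (fun t => xGen k m (ℓ t))) (m + i) = 0 := by
  have hℓnodup := (List.nodup_finRange (k - j)).map hℓ.injective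
  simpa [Function.comp_def] using
    statement2_general hℓnodup (by rw [List.length_map, List.length_finRange]; omega)
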